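/- The homology of the underlying chain complex of abelian groups of the dihedral cellular complex C(j)_* is that of the sphere S^{2m−1}: H_n ≅ ℤ for n = 0 and for n = 2m − 1, and H_n = 0 for all other n. -/

import Mathlib

open DihedralGroup Finsupp

noncomputable section

namespace DihedralCell

variable (p : ℕ)

/-- ζ, the rotation of order `p`. -/
def zeta : DihedralGroup p := .r 1

/-- τ, the reflection. -/
def tau : DihedralGroup p := .sr 0

/-- The order-2 subgroup ⟨τ⟩. -/
def Htau : Subgroup (DihedralGroup p) := Subgroup.zpowers (tau p)

/-- Left cosets of ⟨τ⟩. -/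
abbrev Cos := DihedralGroup p ⧸ Htau p

/-- Cell names of the dihedral cellular structure on `S(mγ_j)`: `a0 k q`/`b0 k q` are the
cells `q·a_{k,0}`, `q·b_{k,0}` (indexed by cosets of ⟨τ⟩); `a k l g`, `b k l g` (`1 ≤ l ≤ k-1`)
are the free cells `g·a_{k,l}`, `g·b_{k,l}`; `c k g` is `g·c_k`. -/
inductive CIdx : Type
  | a0 (k : ℕ) (q : Cos p)
  | b0 (k : ℕ) (q : Cos p)
  | a (k l : ℕ) (g : DihedralGroup p)
  | b (k l : ℕ) (g : DihedralGroup p)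
  | c (k : ℕ) (g : DihedralGroup p)

variable {p}

/-- The dimension of a cell. -/
def degC : CIdx p → ℕ
  | .a0 k _ => k - 1
  | .b0 k _ => k - 1
  | .a k l _ => k + l - 1
  | .b k l _ => k + l - 1
  | .c k _ => 2 * k - 1

/-- Validity of a cell index (the junk-free cells), for the sphere `S(mγ)`. -/
def validC (m : ℕ) : CIdx p → Prop
  | .a0 k _ => 1 ≤ k ∧ k ≤ m
  | .b0 k _ => 1 ≤ k ∧ k ≤ m
  | .a k l _ => 1 ≤ l ∧ l ≤ k - 1 ∧ k ≤ m
  | .b k l _ => 1 ≤ l ∧ l ≤ k - 1 ∧ k ≤ m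
  | .c k _ => 1 ≤ k ∧ k ≤ m

/-- The action of the dihedral group on cells. -/
def actC (g' : DihedralGroup p) : CIdx p → CIdx p
  | .a0 k q => .a0 k (g' • q)
  | .b0 k q => .b0 k (g' • q)
  | .a k l g => .a k l (g' * g)
  | .b k l g => .b k l (g' * g)
  | .c k g => .c k (g' * g)

variable (p)

/-- The total module of cellular chains (all degrees together). -/
abbrev ChC := CIdx p →₀ ℤ

/-- The `ℤ`-linear action of `D_{2p}` on chains. -/
def rhoC (g : DihedralGroup p) : ChC p →ₗ[ℤ] ChC p :=
  Finsupp.lmapDomain ℤ ℤ (actC g)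

/-- The submodule of chains of degree `n` (the degree-`n` term of the complex `C(j)`). -/
def Csub (m n : ℕ) : Submodule ℤ (ChC p) :=
  Finsupp.supported ℤ ℤ {i | validC m i ∧ degC i = n}

/-- The boundary of a single cell, following Lemma 2.2 of the paper (for the
representation `γ_j`, i.e. with `ζ_i = ζ^j`). -/
def bndC (j : ℕ) : CIdx p → ChC p
  | .a0 k q => if k ≤ 1 then 0 else single (.a0 (k-1) q) 1 - single (.b0 (k-1) q) 1
  | .b0 k q => if k ≤ 1 then 0 else single (.a0 (k-1) q) 1 - single (.b0 (k-1) q) 1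
  | .c k g =>
      if k ≤ 1 then
        (single (.b0 1 (↑(g * zeta p ^ (j * ((p+1)/2))))) 1 : ChC p) - single (.a0 1 ↑g) 1
      else
        single (.a k (k-1) g) (-1) + single (.a k (k-1) (g * tau p)) ((-1)^k)
        + single (.b k (k-1) (g * zeta p ^ (j * ((p+1)/2)))) 1
        + single (.b k (k-1) (g * zeta p ^ (j * ((p+1)/2)) * tau p)) ((-1)^(k-1))
  | .a k l g =>
      if l = 0 then 0
      else if l = k - 1 then
        (if k = 2 then (single (.a0 k (↑g : Cos p)) (-1) : ChC p)
         else single (.a k (k-2) g) (-1) + single (.a k (k-2) (g * tau p)) ((-1)^(k-1)))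
        + single (.c (k-1) g) (-1)
        - ∑ t ∈ Finset.range ((p-1)/2), single (.c (k-1) (g * zeta p ^ (j * (t+1)))) 1
        + ∑ t ∈ Finset.range ((p-1)/2),
            single (.c (k-1) (g * zeta p ^ (j * (t+1)) * tau p)) ((-1)^(k-2))
      else if l = 1 then
        single (.a (k-1) 1 g) 1 - single (.b (k-1) 1 g) 1 + single (.a0 k (↑g : Cos p)) ((-1)^(k-1))
      else
        single (.a (k-1) l g) 1 - single (.b (k-1) l g) 1
        + single (.a k (l-1) g) ((-1)^(k-l)) + single (.a k (l-1) (g * tau p)) ((-1)^(k-1))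
  | .b k l g =>
      if l = 0 then 0
      else if l = k - 1 then
        (if k = 2 then (single (.b0 k (↑g : Cos p)) (-1) : ChC p)
         else single (.b k (k-2) g) (-1) + single (.b k (k-2) (g * tau p)) ((-1)^(k-1)))
        + single (.c (k-1) g) (-1)
        - ∑ t ∈ Finset.range ((p-1)/2), single (.c (k-1) (g * zeta p ^ (j * (t+1)))) 1
        + ∑ t ∈ Finset.range ((p-1)/2),
            single (.c (k-1) (g * zeta p ^ (j * (t+1)) * tau p)) ((-1)^(k-2))
      else if l = 1 then
        single (.a (k-1) 1 g) 1 - single (.b (k-1) 1 g) 1 + single (.b0 k (↑g : Cos p)) ((-1)^(k-1))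
      else
        single (.a (k-1) l g) 1 - single (.b (k-1) l g) 1
        + single (.b k (l-1) g) ((-1)^(k-l)) + single (.b k (l-1) (g * tau p)) ((-1)^(k-1))

/-- The differential of the dihedral cellular complex `C(j)`. -/
def DC (j : ℕ) : ChC p →ₗ[ℤ] ChC p :=
  Finsupp.lift (ChC p) ℤ (CIdx p) (bndC p j)

/-- The submodule of `D_{2p}`-invariant chains of degree `n`. -/
def InvC (m n : ℕ) : Submodule ℤ (ChC p) :=
  Csub p m n ⊓ (⨅ g : DihedralGroup p, LinearMap.ker (rhoC p g - LinearMap.id))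

/-- Cycles of degree `n` of the underlying complex of abelian groups. -/
def ZcC (m j n : ℕ) : Submodule ℤ (ChC p) := Csub p m n ⊓ LinearMap.ker (DC p j)

/-- Degree-`n` homology of the underlying complex of abelian groups of `C(j)`. -/
def HcC (m j n : ℕ) : Type :=
  ↥(ZcC p m j n) ⧸ Submodule.comap (ZcC p m j n).subtype
    (Submodule.map (DC p j) (Csub p m (n+1)))

instance (m j n : ℕ) : AddCommGroup (HcC p m j n) :=
  inferInstanceAs (AddCommGroup (↥(ZcC p m j n) ⧸ Submodule.comap (ZcC p m j n).subtype
    (Submodule.map (DC p j) (Csub p m (n+1)))))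

instance (m j n : ℕ) : Module ℤ (HcC p m j n) :=
  inferInstanceAs (Module ℤ (↥(ZcC p m j n) ⧸ Submodule.comap (ZcC p m j n).subtype
    (Submodule.map (DC p j) (Csub p m (n+1)))))

/-- Cycles of degree `n` of the complex of `D_{2p}`-invariants `(C(j))^{D_{2p}}`. -/
def ZinvC (m j n : ℕ) : Submodule ℤ (ChC p) := InvC p m n ⊓ LinearMap.ker (DC p j)

/-- Degree-`n` homology of the complex of `D_{2p}`-invariants of `C(j)`. -/
def HinvC (m j n : ℕ) : Type :=
  ↥(ZinvC p m j n) ⧸ Submodule.comap (ZinvC p m j n).subtype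
    (Submodule.map (DC p j) (InvC p m (n+1)))

instance (m j n : ℕ) : AddCommGroup (HinvC p m j n) :=
  inferInstanceAs (AddCommGroup (↥(ZinvC p m j n) ⧸ Submodule.comap (ZinvC p m j n).subtype
    (Submodule.map (DC p j) (InvC p m (n+1)))))

instance (m j n : ℕ) : Module ℤ (HinvC p m j n) :=
  inferInstanceAs (Module ℤ (↥(ZinvC p m j n) ⧸ Submodule.comap (ZinvC p m j n).subtype
    (Submodule.map (DC p j) (InvC p m (n+1)))))

/-- The dual module: `ℤ`-linear functionals on chains. -/
abbrev DualC := ChC p →ₗ[ℤ] ℤ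

/-- Degree-`n` cochains of `Hom_{ℤ[D_{2p}]}(C(j), ℤ)`: `D_{2p}`-equivariant functionals
(`ℤ` with the trivial action) supported on the degree-`n` cells. -/
def KcoC (m n : ℕ) : Submodule ℤ (DualC p) :=
  (⨅ i : {i : CIdx p // ¬(validC m i ∧ degC i = n)},
      LinearMap.ker (LinearMap.applyₗ (single i.1 1)))
  ⊓ (⨅ g : DihedralGroup p, LinearMap.ker (LinearMap.lcomp ℤ ℤ (rhoC p g) - LinearMap.id))

open Classical in
/-- Projection of the total chain module onto its degree-`n` summand. -/
def projC (m n : ℕ) : ChC p →ₗ[ℤ] ChC p :=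
  Finsupp.lift (ChC p) ℤ (CIdx p)
    (fun i => if validC m i ∧ degC i = n then single i 1 else 0)

/-- The coboundary taking a degree-`n` cochain `f` to the degree-`(n+1)` cochain
`f ∘ d` (precomposition with the differential out of degree `n+1`). -/
def cobdC (m j n : ℕ) : DualC p →ₗ[ℤ] DualC p :=
  LinearMap.lcomp ℤ ℤ ((DC p j).comp (projC p m (n+1)))

/-- Degree-`n` cocycles of `Hom_{ℤ[D_{2p}]}(C(j), ℤ)`. -/
def ZcoC (m j n : ℕ) : Submodule ℤ (DualC p) := KcoC p m n ⊓ LinearMap.ker (cobdC p m j n)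

/-- Degree-`n` cohomology of the cochain complex `Hom_{ℤ[D_{2p}]}(C(j), ℤ)`. -/
def HcoC (m j n : ℕ) : Type :=
  ↥(ZcoC p m j n) ⧸ Submodule.comap (ZcoC p m j n).subtype
    (Submodule.map (cobdC p m j (n-1)) (KcoC p m (n-1)))

instance (m j n : ℕ) : AddCommGroup (HcoC p m j n) :=
  inferInstanceAs (AddCommGroup (↥(ZcoC p m j n) ⧸ Submodule.comap (ZcoC p m j n).subtype
    (Submodule.map (cobdC p m j (n-1)) (KcoC p m (n-1)))))

instance (m j n : ℕ) : Module ℤ (HcoC p m j n) :=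
  inferInstanceAs (Module ℤ (↥(ZcoC p m j n) ⧸ Submodule.comap (ZcoC p m j n).subtype
    (Submodule.map (cobdC p m j (n-1)) (KcoC p m (n-1)))))


end DihedralCell

end

/-!
Passing from `S(kγ_j)` to `S((k+1)γ_j)` adds the cells `a_{k+1,l}`, `b_{k+1,l}` and `c_{k+1}`. Each
of the two rows is a complex with differentials `1 ± τ`, which is exact because `x(1 - eτ) = 0`
forces `x` to be a multiple of `1 + eτ`. Hence a cycle of degree less than `2k` can be moved by a
boundary into `S(kγ_j)`. In degree `2k`, the boundaries of the cells `c_{k+1}` identify every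
`x(1 ± τ)·a_{k+1,k}` with an integer multiple of `(1 ± τ)·a_{k+1,k}`, since the class does not
change under `ζ^j` and changes by a sign under `τ`. For `k > 0` that chain is not a cycle: by
`(1 - eτ)(-(1 + σ) + eστ) = -N(1 - eτ)`, with `N` the norm of the rotation subgroup, its
boundary is minus the fundamental cycle `N(1 ± τ)·c_k` of `S(kγ_j)`. So there is no homology in
degree `2k`, and the fundamental cycle of each sphere bounds in the next one. Finally, a cycle
`x·c_{k+1}` of top degree has `x` fixed by `ζ^j` and fixed up to sign by `τ`, so it is a multiple of
the fundamental cycle.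
-/

noncomputable section

namespace DihedralCell

section LinearExtension

variable {R G M : Type*} [CommSemiring R] [Monoid G] [AddCommMonoid M] [Module R M]

/-- The linear map on a monoid algebra with prescribed values on the monoid elements. -/
def extend (f : G → M) : MonoidAlgebra R G →ₗ[R] M :=
  (MonoidAlgebra.basis G R).constr R f

@[simp]
lemma extend_of (f : G → M) (g : G) : extend f (MonoidAlgebra.of R G g) = f g := by
  rw [MonoidAlgebra.of_apply, ← MonoidAlgebra.basis_apply, extend, Module.Basis.constr_basis]

lemma linearMap_ext_of {f f' : MonoidAlgebra R G →ₗ[R] M}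
    (h : ∀ g, f (MonoidAlgebra.of R G g) = f' (MonoidAlgebra.of R G g)) : f = f' :=
  (MonoidAlgebra.basis G R).ext fun g => by simpa using h g

lemma linearMap_apply_mem_of {f : MonoidAlgebra R G →ₗ[R] M} {S : Submodule R M}
    (h : ∀ g, f (MonoidAlgebra.of R G g) ∈ S) (x : MonoidAlgebra R G) : f x ∈ S := by
  induction x using MonoidAlgebra.induction_on with
  | of g => exact h g
  | add x y hx hy => simpa using add_mem hx hy
  | smul r x hx => simpa using S.smul_mem r hx

end LinearExtension

/-! ### Identities in the integral group ring -/

variable {p : ℕ}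

variable (p) in
/-- The integral group ring `ℤ[D_{2p}]`. -/
abbrev GroupRing := MonoidAlgebra ℤ (DihedralGroup p)

/-- The group element `g`, seen in the group ring `ℤ[D_{2p}]`. -/
local notation "δ" => MonoidAlgebra.of ℤ (DihedralGroup _)

lemma tau_mul_tau : tau p * tau p = 1 := sr_mul_self 0

lemma zeta_pow_eq (n : ℕ) : zeta p ^ n = r (n : ZMod p) := r_one_pow n

lemma zeta_pow_self : zeta p ^ p = 1 := r_one_pow_n

lemma tau_mul_zeta_pow (n : ℕ) : tau p * zeta p ^ n = (zeta p ^ n)⁻¹ * tau p := by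
  simp [zeta_pow_eq, tau]

lemma dihedral_induction [NeZero p] {j : ℕ} (hj : j.Coprime p) {P : DihedralGroup p → Prop}
    (one : P 1) (rotate : ∀ g, P g → P (g * zeta p ^ j)) (reflect : ∀ g, P g → P (g * tau p))
    (g : DihedralGroup p) : P g := by
  have hpow (n : ℕ) : P ((zeta p ^ j) ^ n) := by
    induction n with
    | zero => simpa using one
    | succ n ih => simpa only [pow_succ] using rotate _ ih
  have hrot (i : ZMod p) : P (r i) := by
    have h : (zeta p ^ j) ^ ((ZMod.unitOfCoprime j hj)⁻¹ * i : ZMod p).val = r i := by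
      rw [← pow_mul, zeta_pow_eq, Nat.cast_mul, ZMod.natCast_zmod_val,
        ← ZMod.coe_unitOfCoprime j hj, Units.mul_inv_cancel_left]
    exact h ▸ hpow _
  cases g with
  | r i => exact hrot i
  | sr i => simpa [tau] using reflect _ (hrot (-i))

variable (p) in
/-- The rotation `ω = ζ^{j(p+1)/2}`, a square root of `ζ^j`. -/
def halfRot (j : ℕ) : DihedralGroup p := zeta p ^ (j * ((p + 1) / 2))

variable (p) in
/-- The element `σ = ζ^j + ζ^{2j} + ⋯ + ζ^{j(p-1)/2}` of the group ring. -/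
def sigma (j : ℕ) : GroupRing p :=
  ∑ t ∈ Finset.range ((p - 1) / 2), δ (zeta p ^ (j * (t + 1)))

variable (p) in
/-- The element `1 - eτ`, for a sign `e`. -/
def oneSubTau (e : ℤˣ) : GroupRing p := 1 - e • δ (tau p)

variable (p) in
/-- The element `-(1 + σ) - eστ`, the coefficient of the cells `c` in the boundaries of the
cells `a` and `b`. -/
def capCoeff (j : ℕ) (e : ℤˣ) : GroupRing p :=
  -(1 + sigma p j) - e • (sigma p j * δ (tau p))

variable (p) in
/-- The norm element `∑ ζ^{ij}` of the rotation subgroup. -/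
def rotNorm (j : ℕ) : GroupRing p := ∑ i ∈ Finset.range p, δ (zeta p ^ j) ^ i

lemma halfRot_sq (hodd : Odd p) (j : ℕ) : halfRot p j ^ 2 = zeta p ^ j := by
  obtain ⟨q, hq⟩ := hodd
  have h : j * ((p + 1) / 2) * 2 = j + p * j := by
    rw [mul_assoc, Nat.div_mul_cancel (by omega)]; ring
  rw [halfRot, ← pow_mul, h, pow_add, pow_mul _ p, zeta_pow_self, one_pow, mul_one]

lemma halfRot_pow_self (j : ℕ) : halfRot p j ^ p = 1 := by
  rw [halfRot, pow_right_comm, zeta_pow_self, one_pow]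

lemma tau_mul_halfRot (j : ℕ) : tau p * halfRot p j = (halfRot p j)⁻¹ * tau p :=
  tau_mul_zeta_pow _

lemma of_tau_mul_of_tau : δ (tau p) * δ (tau p) = 1 := by
  rw [← map_mul, tau_mul_tau, map_one]

lemma of_tau_mul_oneSubTau (e : ℤˣ) : δ (tau p) * oneSubTau p e = -(e • oneSubTau p e) := by
  rw [oneSubTau, mul_sub, mul_smul_comm, of_tau_mul_of_tau, smul_sub, smul_smul,
    Int.units_mul_self, one_smul, mul_one, neg_sub]

lemma oneSubTau_neg_mul (e : ℤˣ) : oneSubTau p (-e) * oneSubTau p e = 0 := by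
  nth_rw 1 [oneSubTau]
  rw [sub_mul, smul_mul_assoc, of_tau_mul_oneSubTau, smul_neg, smul_smul, neg_mul,
    Int.units_mul_self, Units.neg_smul, one_smul, neg_neg, one_mul, sub_self]

lemma mul_oneSubTau_eq_zero_iff {x : GroupRing p} {e : ℤˣ} :
    x * oneSubTau p e = 0 ↔ x * δ (tau p) = e • x := by
  rw [oneSubTau, mul_sub, mul_one, mul_smul_comm, sub_eq_zero, eq_comm, ← inv_smul_eq_iff,
    Int.units_inv_eq_self]

variable (p) in
/-- The projection of the group ring onto the span of the rotations. -/
def rotPart : GroupRing p →ₗ[ℤ] GroupRing p :=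
  extend fun
    | r i => δ (r i)
    | sr _ => 0

lemma rotPart_add_rotPart_mul_tau (x : GroupRing p) :
    rotPart p x + rotPart p (x * δ (tau p)) * δ (tau p) = x := by
  have h : rotPart p + LinearMap.mulRight ℤ (δ (tau p)) ∘ₗ rotPart p ∘ₗ
      LinearMap.mulRight ℤ (δ (tau p)) = LinearMap.id := by
    refine linearMap_ext_of fun g => ?_
    cases g <;> simp [rotPart, ← map_mul, -MonoidAlgebra.of_apply, tau]
  exact LinearMap.congr_fun h x

lemma exists_mul_oneSubTau_neg_of_mul_eq_zero {x : GroupRing p} {e : ℤˣ}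
    (h : x * oneSubTau p e = 0) : ∃ u, u * oneSubTau p (-e) = x := by
  refine ⟨rotPart p x, ?_⟩
  conv_rhs => rw [← rotPart_add_rotPart_mul_tau x, mul_oneSubTau_eq_zero_iff.1 h]
  rw [oneSubTau, mul_sub, mul_one, Units.neg_smul, mul_neg, sub_neg_eq_add, mul_smul_comm,
    LinearMap.map_smul_of_tower, smul_mul_assoc]

lemma sigma_eq_sum_halfRot (hodd : Odd p) (j : ℕ) :
    sigma p j = ∑ t ∈ Finset.range ((p - 1) / 2), δ (halfRot p j ^ (2 * t + 2)) :=
  Finset.sum_congr rfl fun t _ => by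
    rw [pow_mul, ← halfRot_sq hodd j, ← pow_mul, mul_add, mul_one]

lemma sigma_mul_halfRot_sub (hodd : Odd p) (j : ℕ) :
    sigma p j * δ (halfRot p j) - sigma p j * δ (halfRot p j)⁻¹ = 1 - δ (halfRot p j) := by
  let f (t : ℕ) : GroupRing p := δ (halfRot p j ^ (2 * t + 1))
  have hq : 2 * ((p - 1) / 2) + 1 = p := by have ⟨q, hq⟩ := hodd; omega
  calc sigma p j * δ (halfRot p j) - sigma p j * δ (halfRot p j)⁻¹
      = ∑ t ∈ Finset.range ((p - 1) / 2), (f (t + 1) - f t) := by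
        rw [sigma_eq_sum_halfRot hodd, Finset.sum_mul, Finset.sum_mul, ← Finset.sum_sub_distrib]
        refine Finset.sum_congr rfl fun t _ => ?_
        simp only [f, ← map_mul, ← pow_succ, mul_add_one]
        rw [pow_succ _ (2 * t + 1), mul_inv_cancel_right]
    _ = 1 - δ (halfRot p j) := by
        rw [Finset.sum_range_sub]
        simp only [f, hq, halfRot_pow_self, map_one, mul_zero, zero_add, pow_one]

lemma capCoeff_mul_oneSubTau (j : ℕ) (e : ℤˣ) :
    capCoeff p j e * oneSubTau p e = -oneSubTau p e := by
  rw [capCoeff, sub_mul, smul_mul_assoc, mul_assoc, of_tau_mul_oneSubTau, mul_neg, mul_smul_comm,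
    smul_neg, smul_smul, Int.units_mul_self, one_smul, neg_mul, add_mul, one_mul]
  abel

lemma capCoeff_mul_halfRot_mul_oneSubTau (hodd : Odd p) (j : ℕ) (e : ℤˣ) :
    capCoeff p j e * (δ (halfRot p j) * oneSubTau p e) = -oneSubTau p e := by
  have hτ : δ (tau p) * (δ (halfRot p j) * oneSubTau p e) =
      -(e • (δ (halfRot p j)⁻¹ * oneSubTau p e)) := by
    rw [← mul_assoc, ← map_mul, tau_mul_halfRot, map_mul, mul_assoc, of_tau_mul_oneSubTau,
      mul_neg, mul_smul_comm]
  have hσ := congrArg (· * oneSubTau p e) (sigma_mul_halfRot_sub hodd j)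
  simp only [sub_mul, mul_assoc, one_mul] at hσ
  rw [capCoeff, sub_mul, smul_mul_assoc, mul_assoc (sigma p j), hτ, mul_neg, mul_smul_comm,
    smul_neg, smul_smul, Int.units_mul_self, one_smul, neg_mul, add_mul, one_mul,
    eq_add_of_sub_eq hσ]
  abel

lemma one_add_sigma_add_conj_sigma (hodd : Odd p) (j : ℕ) :
    1 + sigma p j + δ (tau p) * sigma p j * δ (tau p) = rotNorm p j := by
  obtain ⟨q, rfl⟩ := hodd
  have hz : (zeta (2 * q + 1) ^ j) ^ (2 * q + 1) = 1 := by
    rw [pow_right_comm, zeta_pow_self, one_pow]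
  have hconj (t : ℕ) (ht : t < q) : tau (2 * q + 1) * (zeta (2 * q + 1) ^ j) ^ (t + 1) *
      tau (2 * q + 1) = (zeta (2 * q + 1) ^ j) ^ (q + 1 + (q - 1 - t)) := by
    rw [← pow_mul, tau_mul_zeta_pow, mul_assoc, tau_mul_tau, mul_one, pow_mul,
      inv_eq_iff_mul_eq_one, ← pow_add, show t + 1 + (q + 1 + (q - 1 - t)) = 2 * q + 1 by omega, hz]
  have hσ : sigma (2 * q + 1) j =
      ∑ t ∈ Finset.range q, δ ((zeta (2 * q + 1) ^ j) ^ (t + 1)) := by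
    simp only [sigma, pow_mul, Nat.add_sub_cancel, Nat.mul_div_cancel_left q two_pos]
  have hτσ : δ (tau (2 * q + 1)) * sigma (2 * q + 1) j * δ (tau (2 * q + 1)) =
      ∑ t ∈ Finset.range q, δ ((zeta (2 * q + 1) ^ j) ^ (q + 1 + t)) := by
    rw [hσ, Finset.mul_sum, Finset.sum_mul, ← Finset.sum_range_reflect]
    refine Finset.sum_congr rfl fun t ht => ?_
    have ht := Finset.mem_range.1 ht
    rw [← map_mul, ← map_mul, hconj _ (by omega), show q - 1 - (q - 1 - t) = t by omega]
  rw [hτσ, hσ, rotNorm, show 2 * q + 1 = q + 1 + q by ring, Finset.sum_range_add,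
    Finset.sum_range_succ']
  simp only [map_pow, pow_zero]
  rw [add_comm 1]

lemma rotNorm_mul_of_zeta_pow (j : ℕ) : rotNorm p j * δ (zeta p ^ j) = rotNorm p j := by
  rw [rotNorm, Finset.sum_mul, ← sub_eq_zero, ← Finset.sum_sub_distrib]
  simp only [← pow_succ]
  rw [Finset.sum_range_sub, ← map_pow, pow_right_comm, zeta_pow_self, one_pow, map_one, pow_zero,
    sub_self]

lemma rotNorm_mul_of_halfRot (j : ℕ) : rotNorm p j * δ (halfRot p j) = rotNorm p j := by
  have h (n : ℕ) : rotNorm p j * δ (zeta p ^ j) ^ n = rotNorm p j := by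
    induction n with
    | zero => rw [pow_zero, mul_one]
    | succ n ih => rw [pow_succ, ← mul_assoc, ih, rotNorm_mul_of_zeta_pow]
  rw [halfRot, pow_mul, map_pow, h]

lemma of_halfRot_mul_rotNorm (j : ℕ) : δ (halfRot p j) * rotNorm p j = rotNorm p j := by
  have h : Commute (δ (halfRot p j)) (rotNorm p j) := by
    refine Commute.sum_right _ _ _ fun i _ => ?_
    exact (((Commute.refl (zeta p)).pow_pow _ _).map (δ)).pow_right i
  rw [h.eq, rotNorm_mul_of_halfRot]

lemma oneSubTau_neg_mul_capCoeff (hodd : Odd p) (j : ℕ) (e : ℤˣ) :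
    oneSubTau p (-e) * capCoeff p j e = -(rotNorm p j * oneSubTau p (-e)) := by
  rw [← one_add_sigma_add_conj_sigma hodd j, oneSubTau, capCoeff]
  rcases Int.units_eq_one_or e with rfl | rfl <;>
    simp only [neg_neg, Units.neg_smul, one_smul, sub_mul, mul_sub, add_mul, mul_add, one_mul,
      mul_one, neg_mul, mul_neg, mul_assoc, of_tau_mul_of_tau] <;>
    abel

lemma rotNorm_mul_oneSubTau_mul_of_halfRot (j : ℕ) (e : ℤˣ) :
    rotNorm p j * oneSubTau p e * δ (halfRot p j) = rotNorm p j * oneSubTau p e := by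
  have hinv : rotNorm p j * δ (halfRot p j)⁻¹ = rotNorm p j := by
    nth_rw 1 [← rotNorm_mul_of_halfRot]
    rw [mul_assoc, ← map_mul, mul_inv_cancel, map_one, mul_one]
  rw [mul_assoc, oneSubTau, sub_mul, one_mul, smul_mul_assoc, ← map_mul, tau_mul_halfRot, map_mul,
    mul_sub, mul_sub, mul_smul_comm, mul_smul_comm, ← mul_assoc, hinv, rotNorm_mul_of_halfRot,
    mul_one]

lemma coeff_one_rotNorm_mul_oneSubTau [NeZero p] {j : ℕ} (hj : j.Coprime p) (e : ℤˣ) :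
    (rotNorm p j * oneSubTau p e).coeff 1 = 1 := by
  have hrot (i : ℕ) (hi : i < p) :
      (δ (zeta p ^ j) ^ i : GroupRing p).coeff 1 = if i = 0 then 1 else 0 := by
    have : ((j * i : ℕ) : ZMod p) = 0 ↔ i = 0 := by
      rw [ZMod.natCast_eq_zero_iff, hj.symm.dvd_mul_left]
      exact ⟨fun h => Nat.eq_zero_of_dvd_of_lt h hi, fun h => h ▸ dvd_zero p⟩
    rw [← map_pow, ← pow_mul, zeta_pow_eq, MonoidAlgebra.of_apply, MonoidAlgebra.coeff_single,
      single_apply]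
    simp only [one_def, r.injEq, this]
  have hrefl (i : ℕ) : (δ (zeta p ^ j) ^ i * δ (tau p) : GroupRing p).coeff 1 = 0 := by
    rw [← map_pow, ← map_mul, ← pow_mul, zeta_pow_eq, MonoidAlgebra.of_apply,
      MonoidAlgebra.coeff_single, single_eq_of_ne (by simp [tau, one_def, -r_zero])]
  rw [oneSubTau, mul_sub, mul_one, mul_smul_comm, rotNorm, Finset.sum_mul, Units.smul_def,
    MonoidAlgebra.coeff_sub, MonoidAlgebra.coeff_smul, MonoidAlgebra.coeff_sum,
    MonoidAlgebra.coeff_sum, Finsupp.sub_apply, Finsupp.smul_apply, finsetSum_apply,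
    finsetSum_apply,
    Finset.sum_congr rfl fun i hi => hrot i (Finset.mem_range.1 hi),
    Finset.sum_congr rfl fun i _ => hrefl i]
  simp [NeZero.ne p]

lemma eq_zero_of_coeff_one_eq_zero [NeZero p] {j : ℕ} (hj : j.Coprime p) {e : ℤˣ}
    {x : GroupRing p} (hrot : x * δ (zeta p ^ j) = x) (hrefl : x * δ (tau p) = e • x)
    (hone : x.coeff 1 = 0) : x = 0 := by
  have hmul (g h : DihedralGroup p) : (x * δ h).coeff (g * h) = x.coeff g := by
    rw [MonoidAlgebra.of_apply, MonoidAlgebra.coeff_mul_single_apply, mul_one, mul_inv_cancel_right]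
  ext g
  refine dihedral_induction hj (P := (x.coeff · = 0)) hone (fun g hg => ?_) (fun g hg => ?_) g
  · rw [← hrot, hmul, hg]
  · have h : e • x.coeff (g * tau p) = 0 := by
      rw [← hg, ← hmul g (tau p), hrefl]
      rfl
    exact (smul_eq_zero_iff_eq e).1 h

lemma mul_of_zeta_pow_eq_self (hodd : Odd p) {j : ℕ} {e : ℤˣ} {x : GroupRing p}
    (h : x * oneSubTau p e = 0) (hω : x * δ (halfRot p j) * oneSubTau p e = 0) :
    x * δ (zeta p ^ j) = x := by
  have heq : x * δ (halfRot p j) = x * δ (halfRot p j)⁻¹ := by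
    rw [mul_oneSubTau_eq_zero_iff] at h hω
    have hcomm : halfRot p j * tau p = tau p * (halfRot p j)⁻¹ := by
      have hsemi : SemiconjBy (tau p) (halfRot p j) (halfRot p j)⁻¹ := tau_mul_halfRot j
      simpa using hsemi.inv_right.eq.symm
    rw [mul_assoc, ← map_mul, hcomm, map_mul, ← mul_assoc, h, smul_mul_assoc] at hω
    exact (smul_left_cancel e hω).symm
  rw [← halfRot_sq hodd, sq, map_mul, ← mul_assoc, heq, mul_assoc, ← map_mul, inv_mul_cancel,
    map_one, mul_one]

lemma eq_smul_rotNorm_mul_of_mul_eq_zero (hodd : Odd p) {j : ℕ} (hj : j.Coprime p) {e : ℤˣ}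
    {x : GroupRing p} (h : x * oneSubTau p e = 0)
    (hω : x * δ (halfRot p j) * oneSubTau p e = 0) :
    x = x.coeff 1 • (rotNorm p j * oneSubTau p (-e)) := by
  have : NeZero p := ⟨hodd.pos.ne'⟩
  rw [← sub_eq_zero]
  refine eq_zero_of_coeff_one_eq_zero hj (e := e) ?_ ?_ ?_
  · rw [sub_mul, mul_of_zeta_pow_eq_self hodd h hω, smul_mul_assoc, ← halfRot_sq hodd, sq, map_mul,
      ← mul_assoc, rotNorm_mul_oneSubTau_mul_of_halfRot, rotNorm_mul_oneSubTau_mul_of_halfRot]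
  · rw [← mul_oneSubTau_eq_zero_iff, sub_mul, h, smul_mul_assoc, mul_assoc, oneSubTau_neg_mul,
      mul_zero, smul_zero, sub_zero]
  · rw [MonoidAlgebra.coeff_sub, MonoidAlgebra.coeff_smul, Finsupp.sub_apply, Finsupp.smul_apply,
      coeff_one_rotNorm_mul_oneSubTau hj, smul_eq_mul, mul_one, sub_self]

lemma apply_mem_span_apply_one [NeZero p] {j : ℕ} (hj : j.Coprime p) {M : Type*} [AddCommGroup M]
    {e : ℤˣ} {f : GroupRing p →ₗ[ℤ] M} (hrot : ∀ x, f (x * δ (zeta p ^ j)) = f x)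
    (hrefl : ∀ x, f (x * δ (tau p)) = e • f x) (x : GroupRing p) :
    f x ∈ Submodule.span ℤ {f 1} := by
  refine linearMap_apply_mem_of (dihedral_induction hj ?_ (fun g hg => ?_) (fun g hg => ?_)) x
  · exact Submodule.mem_span_singleton_self _
  · rwa [map_mul, hrot]
  · rw [map_mul, hrefl]
    exact Submodule.smul_of_tower_mem _ e hg

/-! ### The differential on chains with group ring coefficients -/

/-- The two rows of cells `a_{k,l}` and `b_{k,l}` of the complex. -/
inductive Row
  | a
  | b

/-- The cell `g·a_{k,l}` or `g·b_{k,l}`, with the coset cells at `l = 0`. -/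
def rowCell : Row → ℕ → ℕ → DihedralGroup p → CIdx p
  | .a, k, 0, g => .a0 k g
  | .b, k, 0, g => .b0 k g
  | .a, k, l + 1, g => .a k (l + 1) g
  | .b, k, l + 1, g => .b k (l + 1) g

variable (p) in
/-- The chain `x·a_{k,l}` or `x·b_{k,l}` for `x` in the group ring. -/
def rowChain (β : Row) (k l : ℕ) : GroupRing p →ₗ[ℤ] ChC p :=
  extend fun g => single (rowCell β k l g) 1

variable (p) in
/-- The chain `x·c_k` for `x` in the group ring. -/
def cChain (k : ℕ) : GroupRing p →ₗ[ℤ] ChC p := extend fun g => single (.c k g) 1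

variable (p) in
/-- The element by which a row differential multiplies, up to sign: `a_{k,l+1}` is mapped to
`rowCoeff l · a_{k,l}`, and likewise for `b`. -/
def rowCoeff : ℕ → GroupRing p
  | 0 => 1
  | l + 1 => oneSubTau p ((-1) ^ l)

variable (p) in
/-- The part of `d(x·a_{k+1,l})`, or equally of `d(x·b_{k+1,l})`, that lies in the
subcomplex of the cells of levels at most `k`. -/
def lowerBoundary (j k l : ℕ) : GroupRing p →ₗ[ℤ] ChC p :=
  if l < k then rowChain p .a k l - rowChain p .b k l
  else cChain p k ∘ₗ LinearMap.mulRight ℤ (capCoeff p j ((-1) ^ k))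

@[simp]
lemma rowChain_of (β : Row) (k l : ℕ) (g : DihedralGroup p) :
    rowChain p β k l (δ g) = single (rowCell β k l g) 1 :=
  extend_of _ g

@[simp]
lemma cChain_of (k : ℕ) (g : DihedralGroup p) : cChain p k (δ g) = single (.c k g) 1 :=
  extend_of _ g

lemma lowerBoundary_of_lt {j k l : ℕ} (h : l < k) :
    lowerBoundary p j k l = rowChain p .a k l - rowChain p .b k l :=
  if_pos h

lemma lowerBoundary_self_apply (j k : ℕ) (x : GroupRing p) :
    lowerBoundary p j k k x = cChain p k (x * capCoeff p j ((-1) ^ k)) := by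
  rw [lowerBoundary, if_neg (lt_irrefl k)]
  rfl

@[simp]
lemma DC_single (j : ℕ) (i : CIdx p) : DC p j (single i 1) = bndC p j i := by
  simp [DC]

lemma of_mul_oneSubTau (g : DihedralGroup p) (e : ℤˣ) :
    δ g * oneSubTau p e = δ g - e • δ (g * tau p) := by
  rw [oneSubTau, mul_sub, mul_one, mul_smul_comm, map_mul]

lemma DC_rowChain_one_zero (j : ℕ) (β : Row) (x : GroupRing p) :
    DC p j (rowChain p β 1 0 x) = 0 := by
  have h : DC p j ∘ₗ rowChain p β 1 0 = 0 := linearMap_ext_of fun g => by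
    cases β <;> simp [rowCell, bndC, -MonoidAlgebra.of_apply]
  exact LinearMap.congr_fun h x

lemma DC_rowChain_zero (j : ℕ) (β : Row) {k : ℕ} (hk : 1 ≤ k) (x : GroupRing p) :
    DC p j (rowChain p β (k + 1) 0 x) = lowerBoundary p j k 0 x := by
  have h : DC p j ∘ₗ rowChain p β (k + 1) 0 = lowerBoundary p j k 0 := by
    rw [lowerBoundary_of_lt hk]
    refine linearMap_ext_of fun g => ?_
    cases β <;> simp [rowCell, bndC, -MonoidAlgebra.of_apply, Nat.one_le_iff_ne_zero.1 hk]
  exact LinearMap.congr_fun h x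

lemma cChain_of_mul_capCoeff (j k : ℕ) (g : DihedralGroup p) (e : ℤˣ) :
    cChain p k (δ g * capCoeff p j e) =
      single (.c k g) (-1)
        - ∑ t ∈ Finset.range ((p - 1) / 2), single (.c k (g * zeta p ^ (j * (t + 1)))) 1
        - ∑ t ∈ Finset.range ((p - 1) / 2),
            single (.c k (g * zeta p ^ (j * (t + 1)) * tau p)) (e : ℤ) := by
  rw [capCoeff, sigma, mul_sub, mul_neg, mul_add, mul_one, mul_smul_comm, Finset.sum_mul,
    Finset.mul_sum, Finset.mul_sum]
  simp only [← map_mul, map_sub, map_neg, map_add, map_sum, LinearMap.map_smul_of_tower,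
    cChain_of, Finset.smul_sum, Units.smul_def, Finsupp.smul_single, smul_eq_mul, mul_one,
    ← mul_assoc, single_neg]
  abel

lemma smul_rowChain_of_mul_rowCoeff (β : Row) (k l d : ℕ) (g : DihedralGroup p) :
    (-1 : ℤˣ) ^ d • rowChain p β k (l + 1) (δ g * rowCoeff p (l + 1)) =
      single (rowCell β k (l + 1) g) ((-1) ^ d)
        + single (rowCell β k (l + 1) (g * tau p)) ((-1) ^ (d + l + 1)) := by
  rw [rowCoeff, of_mul_oneSubTau, map_sub, LinearMap.map_smul_of_tower, rowChain_of, rowChain_of,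
    smul_sub, smul_smul, ← pow_add, pow_succ _ (d + l), mul_neg_one, single_neg, sub_eq_add_neg]
  simp [Units.smul_def]

lemma bndC_rowCell_of_lt (j : ℕ) (β : Row) {k l : ℕ} (h : l + 1 < k) (g : DihedralGroup p) :
    bndC p j (rowCell β (k + 1) (l + 1) g) = (-1 : ℤˣ) ^ (k - l) •
        rowChain p β (k + 1) l (δ g * rowCoeff p l) + lowerBoundary p j k (l + 1) (δ g) := by
  rw [lowerBoundary_of_lt h, LinearMap.sub_apply, rowChain_of, rowChain_of]
  cases l with
  | zero =>
    cases β <;>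
      simp [rowCell, bndC, rowCoeff, Units.smul_def, h.ne, add_comm, -MonoidAlgebra.of_apply]
  | succ l =>
    rw [smul_rowChain_of_mul_rowCoeff, show k - (l + 1) + l + 1 = k by omega]
    cases β <;>
      simp only [rowCell, bndC, Nat.add_eq_zero_iff, one_ne_zero, and_false, and_self, ↓reduceIte,
        add_tsub_cancel_right, h.ne, Nat.add_eq_right, Nat.reduceSubDiff] <;>
      abel

lemma bndC_rowCell_self (j : ℕ) (β : Row) (k : ℕ) (g : DihedralGroup p) :
    bndC p j (rowCell β (k + 2) (k + 1) g) = (-1 : ℤˣ) ^ 1 •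
      rowChain p β (k + 2) k (δ g * rowCoeff p k) + lowerBoundary p j (k + 1) (k + 1) (δ g) := by
  rw [lowerBoundary_self_apply, cChain_of_mul_capCoeff]
  cases k with
  | zero =>
    cases β <;>
      simp only [rowCell, bndC, zero_add, one_ne_zero, ↓reduceIte, Nat.add_one_sub_one, single_neg,
        tsub_self, pow_zero, pow_one, rowCoeff, mul_one, rowChain_of, Units.neg_smul, one_smul,
        Units.val_neg, Units.val_one, Finset.sum_neg_distrib, sub_neg_eq_add] <;>
      abel
  | succ k =>
    rw [smul_rowChain_of_mul_rowCoeff]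
    cases β <;>
      simp only [rowCell, bndC, Nat.add_eq_zero_iff, one_ne_zero, and_false, and_self, ↓reduceIte,
        Nat.add_one_sub_one, Nat.add_eq_right, add_tsub_cancel_right,
        single_neg, pow_succ, mul_neg, mul_one, neg_neg, Finset.sum_neg_distrib, pow_zero,
        add_comm 1 k, Units.val_pow_eq_pow_val, Units.val_neg, Units.val_one] <;>
      abel

lemma DC_rowChain_succ (j : ℕ) (β : Row) {k l : ℕ} (h : l + 1 ≤ k) (x : GroupRing p) :
    DC p j (rowChain p β (k + 1) (l + 1) x) = (-1 : ℤˣ) ^ (k - l) •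
      rowChain p β (k + 1) l (x * rowCoeff p l) + lowerBoundary p j k (l + 1) x := by
  have hext : DC p j ∘ₗ rowChain p β (k + 1) (l + 1) =
      (-1 : ℤˣ) ^ (k - l) • (rowChain p β (k + 1) l ∘ₗ LinearMap.mulRight ℤ (rowCoeff p l)) +
        lowerBoundary p j k (l + 1) := by
    refine linearMap_ext_of fun g => ?_
    rw [LinearMap.comp_apply, rowChain_of, DC_single]
    obtain hlt | rfl := h.lt_or_eq
    · exact bndC_rowCell_of_lt j β hlt g
    · rw [Nat.add_sub_cancel_left]
      exact bndC_rowCell_self j β l g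
  exact LinearMap.congr_fun hext x

lemma DC_cChain (j k : ℕ) (x : GroupRing p) :
    DC p j (cChain p (k + 1) x) = rowChain p .b (k + 1) k (x * δ (halfRot p j) * rowCoeff p k) -
      rowChain p .a (k + 1) k (x * rowCoeff p k) := by
  have hext : DC p j ∘ₗ cChain p (k + 1) =
      rowChain p .b (k + 1) k ∘ₗ LinearMap.mulRight ℤ (rowCoeff p k) ∘ₗ
        LinearMap.mulRight ℤ (δ (halfRot p j)) -
      rowChain p .a (k + 1) k ∘ₗ LinearMap.mulRight ℤ (rowCoeff p k) := by
    refine linearMap_ext_of fun g => ?_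
    rw [LinearMap.comp_apply, cChain_of, DC_single]
    simp only [LinearMap.sub_apply, LinearMap.comp_apply, LinearMap.mulRight_apply, ← map_mul]
    cases k with
    | zero =>
      simp only [rowCoeff, mul_one, rowChain_of]
      rfl
    | succ k =>
      have ha := smul_rowChain_of_mul_rowCoeff .a (k + 2) k 0 g
      have hb := smul_rowChain_of_mul_rowCoeff .b (k + 2) k 0 (g * halfRot p j)
      rw [pow_zero, one_smul] at ha hb
      rw [ha, hb]
      simp only [bndC, rowCell, halfRot, add_le_iff_nonpos_left, nonpos_iff_eq_zero,
        Nat.add_eq_zero_iff, one_ne_zero, and_false, ↓reduceIte, add_tsub_cancel_right, single_neg,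
        pow_succ, mul_neg, mul_one, neg_neg, pow_zero, zero_add]
      abel
  exact LinearMap.congr_fun hext x

/-! ### Coordinates, degrees and the level filtration -/

lemma eq_one_or_eq_tau_of_mem_Htau {h : DihedralGroup p} (hh : h ∈ Htau p) :
    h = 1 ∨ h = tau p := by
  obtain ⟨n, rfl⟩ := Subgroup.mem_zpowers_iff.1 hh
  have hsq : tau p ^ (2 : ℤ) = 1 := by rw [zpow_two, tau_mul_tau]
  obtain ⟨i, rfl | rfl⟩ := Int.even_or_odd' n
  · left; rw [zpow_mul, hsq, one_zpow]
  · right; rw [zpow_add_one, zpow_mul, hsq, one_zpow, one_mul]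

/-- The element `g(1 + τ)` of the group ring attached to the coset `g⟨τ⟩`. -/
def cosetSum (q : Cos p) : GroupRing p := δ q.out * oneSubTau p (-1)

lemma cosetSum_mk (g : DihedralGroup p) : cosetSum (g : Cos p) = δ g * oneSubTau p (-1) := by
  obtain ⟨⟨h, hh⟩, hout⟩ := QuotientGroup.mk_out_eq_mul (Htau p) g
  rw [cosetSum, hout, map_mul, mul_assoc]
  obtain rfl | rfl := eq_one_or_eq_tau_of_mem_Htau hh
  · rw [map_one, one_mul]
  · rw [of_tau_mul_oneSubTau, Units.neg_smul, one_smul, neg_neg]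

/-- The value of `rowCoord` on a cell. -/
def rowCoordCell (k : ℕ) : Row → CIdx p → GroupRing p
  | .a, .a0 k' q => if k' = k then cosetSum q else 0
  | .b, .b0 k' q => if k' = k then cosetSum q else 0
  | .a, .a k' _ g => if k' = k then δ g else 0
  | .b, .b k' _ g => if k' = k then δ g else 0
  | _, _ => 0

variable (p) in
/-- The coefficient in the group ring of the cells of one row at level `k`, where the
permutation module `ℤ[D_{2p}/⟨τ⟩]` is embedded into the group ring by `cosetSum`. -/
def rowCoord (β : Row) (k : ℕ) : ChC p →ₗ[ℤ] GroupRing p :=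
  Finsupp.lift (GroupRing p) ℤ (CIdx p) (rowCoordCell k β)

variable (p) in
/-- The total coefficient in the group ring of the cells `c`. -/
def cCoord : ChC p →ₗ[ℤ] GroupRing p :=
  Finsupp.lift (GroupRing p) ℤ (CIdx p) fun
    | .c _ g => δ g
    | _ => 0

lemma rowCoord_rowChain_mul_rowCoeff (β : Row) (k l : ℕ) (x : GroupRing p) :
    rowCoord p β k (rowChain p β k l (x * rowCoeff p l)) = x * oneSubTau p ((-1) ^ (l + 1)) := by
  cases l with
  | zero =>
    have h : rowCoord p β k ∘ₗ rowChain p β k 0 = LinearMap.mulRight ℤ (oneSubTau p (-1)) :=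
      linearMap_ext_of fun g => by
        cases β <;> simp [rowCoord, rowCoordCell, rowCell, cosetSum_mk, -MonoidAlgebra.of_apply]
    simpa [rowCoeff] using LinearMap.congr_fun h x
  | succ l =>
    have h : rowCoord p β k ∘ₗ rowChain p β k (l + 1) = LinearMap.id :=
      linearMap_ext_of fun g => by
        cases β <;> simp [rowCoord, rowCoordCell, rowCell, -MonoidAlgebra.of_apply]
    simpa [rowCoeff, pow_succ] using LinearMap.congr_fun h (x * rowCoeff p (l + 1))

lemma rowCoord_rowChain_of_ne {β β' : Row} {k k' : ℕ} (h : β ≠ β' ∨ k ≠ k') (l : ℕ)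
    (x : GroupRing p) : rowCoord p β k (rowChain p β' k' l x) = 0 := by
  have hext : rowCoord p β k ∘ₗ rowChain p β' k' l = 0 := linearMap_ext_of fun g => by
    cases β <;> cases β' <;> cases l <;>
      simp_all [rowCoord, rowCoordCell, rowCell, eq_comm, -MonoidAlgebra.of_apply]
  exact LinearMap.congr_fun hext x

lemma rowCoord_cChain (β : Row) (k k' : ℕ) (x : GroupRing p) :
    rowCoord p β k (cChain p k' x) = 0 := by
  have hext : rowCoord p β k ∘ₗ cChain p k' = 0 := linearMap_ext_of fun g => by
    cases β <;> simp [rowCoord, rowCoordCell, -MonoidAlgebra.of_apply]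
  exact LinearMap.congr_fun hext x

lemma cCoord_cChain (k : ℕ) (x : GroupRing p) : cCoord p (cChain p k x) = x := by
  have hext : cCoord p ∘ₗ cChain p k = LinearMap.id := linearMap_ext_of fun g => by
    simp [cCoord, -MonoidAlgebra.of_apply]
  exact LinearMap.congr_fun hext x

lemma rowChain_zero_mul_of_tau (β : Row) (k : ℕ) (x : GroupRing p) :
    rowChain p β k 0 (x * δ (tau p)) = rowChain p β k 0 x := by
  have hext : rowChain p β k 0 ∘ₗ LinearMap.mulRight ℤ (δ (tau p)) = rowChain p β k 0 := by
    refine linearMap_ext_of fun g => ?_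
    have hcos : ((g * tau p : DihedralGroup p) : Cos p) = g :=
      QuotientGroup.mk_mul_of_mem g (Subgroup.mem_zpowers (tau p))
    rw [LinearMap.comp_apply, LinearMap.mulRight_apply, ← map_mul, rowChain_of, rowChain_of]
    cases β <;> simp only [rowCell, hcos]
  exact LinearMap.congr_fun hext x

lemma exists_mul_rowCoeff_of_mul_eq_zero {l : ℕ} {x : GroupRing p}
    (h : x * oneSubTau p ((-1) ^ (l + 1)) = 0) : ∃ u, u * rowCoeff p (l + 1) = x := by
  simpa [rowCoeff, pow_succ] using exists_mul_oneSubTau_neg_of_mul_eq_zero h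

lemma rowChain_mul_rowCoeff_eq_zero (β : Row) (k : ℕ) {l : ℕ} {x : GroupRing p}
    (h : x * oneSubTau p ((-1) ^ (l + 1)) = 0) : rowChain p β k l (x * rowCoeff p l) = 0 := by
  cases l with
  | zero =>
    obtain ⟨u, rfl⟩ := exists_mul_rowCoeff_of_mul_eq_zero h
    rw [rowCoeff, rowCoeff, oneSubTau, pow_zero, one_smul, mul_one, mul_sub, mul_one, map_sub,
      rowChain_zero_mul_of_tau, sub_self]
  | succ l =>
    rw [rowCoeff]
    rw [pow_succ, pow_succ, mul_assoc, neg_mul_neg, mul_one, mul_one] at h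
    rw [h, map_zero]

lemma rowChain_mul_rowCoeff_congr (β : Row) (k : ℕ) {l : ℕ} {x y : GroupRing p}
    (h : x * oneSubTau p ((-1) ^ (l + 1)) = y * oneSubTau p ((-1) ^ (l + 1))) :
    rowChain p β k l (x * rowCoeff p l) = rowChain p β k l (y * rowCoeff p l) := by
  rw [← sub_eq_zero, ← map_sub, ← sub_mul]
  exact rowChain_mul_rowCoeff_eq_zero β k (by rw [sub_mul, h, sub_self])

lemma rowChain_mul_rowCoeff_mul_rowCoeff (β : Row) (k l : ℕ) (x : GroupRing p) :
    rowChain p β k l (x * rowCoeff p (l + 1) * rowCoeff p l) = 0 := by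
  refine rowChain_mul_rowCoeff_eq_zero β k ?_
  have h := oneSubTau_neg_mul (p := p) ((-1) ^ (l + 1))
  rw [pow_succ, mul_neg_one, neg_neg] at h
  rw [rowCoeff, mul_assoc, pow_succ, mul_neg_one, h, mul_zero]

lemma rowChain_mem_Csub (β : Row) {k l m n : ℕ} (hl : l ≤ k) (hk : k + 1 ≤ m) (hn : k + l = n)
    (x : GroupRing p) : rowChain p β (k + 1) l x ∈ Csub p m n := by
  refine linearMap_apply_mem_of (fun g => ?_) x
  rw [rowChain_of]
  refine single_mem_supported ℤ 1 ?_
  cases β <;> cases l <;> simp only [rowCell, validC, degC, Set.mem_ofPred_eq] <;> omega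

lemma cChain_mem_Csub {k m n : ℕ} (hk : k + 1 ≤ m) (hn : 2 * k + 1 = n) (x : GroupRing p) :
    cChain p (k + 1) x ∈ Csub p m n := by
  refine linearMap_apply_mem_of (fun g => ?_) x
  rw [cChain_of]
  refine single_mem_supported ℤ 1 ?_
  simp only [validC, degC, Set.mem_ofPred_eq]
  omega

lemma Csub_le {m n : ℕ} {S : Submodule ℤ (ChC p)}
    (hrow : ∀ β k l x, l ≤ k → k + 1 ≤ m → k + l = n → rowChain p β (k + 1) l x ∈ S)
    (hc : ∀ k x, k + 1 ≤ m → 2 * k + 1 = n → cChain p (k + 1) x ∈ S) : Csub p m n ≤ S := by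
  rw [Csub, supported_eq_span_single, Submodule.span_le]
  have hcell (β : Row) (k l : ℕ) (g : DihedralGroup p) (hl : l + 1 ≤ k) (hk : k ≤ m)
      (hn : k + l - 1 = n) : single (rowCell β k l g) 1 ∈ S := by
    obtain ⟨k, rfl⟩ := Nat.exists_eq_add_one.2 (Nat.zero_lt_of_lt hl)
    exact rowChain_of β (k + 1) l g ▸ hrow β k l (δ g) (by omega) hk (by omega)
  rintro _ ⟨i, ⟨hvalid, hdeg⟩, rfl⟩
  rw [SetLike.mem_coe]
  cases i with simp only [validC, degC] at hvalid hdeg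
  | a0 k q =>
    induction q using QuotientGroup.induction_on with
    | H g => exact hcell .a k 0 g (by omega) (by omega) (by omega)
  | b0 k q =>
    induction q using QuotientGroup.induction_on with
    | H g => exact hcell .b k 0 g (by omega) (by omega) (by omega)
  | a k l g =>
    obtain ⟨l, rfl⟩ := Nat.exists_eq_add_one.2 hvalid.1
    exact hcell .a k (l + 1) g (by omega) (by omega) (by omega)
  | b k l g =>
    obtain ⟨l, rfl⟩ := Nat.exists_eq_add_one.2 hvalid.1
    exact hcell .b k (l + 1) g (by omega) (by omega) (by omega)
  | c k g =>
    obtain ⟨k, rfl⟩ := Nat.exists_eq_add_one.2 hvalid.1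
    simpa only [cChain_of] using hc k (δ g) (by omega) (by omega)

lemma Csub_mono {m m' : ℕ} (h : m ≤ m') (n : ℕ) : Csub p m n ≤ Csub p m' n :=
  Csub_le (fun β _ _ x hl hk hn => rowChain_mem_Csub β hl (hk.trans h) hn x)
    fun _ x hk hn => cChain_mem_Csub (hk.trans h) hn x

lemma Csub_eq_bot {m n : ℕ} (h : 2 * m ≤ n) : Csub p m n = ⊥ :=
  le_bot_iff.1 <| Csub_le (fun _ _ _ _ _ _ _ => by omega) fun _ _ _ _ => by omega

lemma Csub_succ_le {m n : ℕ} (h : n < m) : Csub p (m + 1) n ≤ Csub p m n :=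
  Csub_le (fun β _ _ x hl _ hn => rowChain_mem_Csub β hl (by omega) hn x)
    fun _ x _ hn => cChain_mem_Csub (by omega) hn x

lemma exists_eq_rowChain_add_of_mem_Csub {k l : ℕ} (hl : l ≤ k) {z : ChC p}
    (hz : z ∈ Csub p (k + 1) (k + l)) : ∃ x y, ∃ w ∈ Csub p k (k + l),
      z = rowChain p .a (k + 1) l x + rowChain p .b (k + 1) l y + w := by
  have hle : Csub p (k + 1) (k + l) ≤ (LinearMap.range (rowChain p .a (k + 1) l) ⊔
      LinearMap.range (rowChain p .b (k + 1) l)) ⊔ Csub p k (k + l) := by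
    refine Csub_le (fun β k' l' x hl' hk' hn => ?_) fun k' x _ hn =>
      Submodule.mem_sup_right (cChain_mem_Csub (by omega) hn x)
    obtain h | rfl := (Nat.le_of_lt_succ hk').lt_or_eq
    · exact Submodule.mem_sup_right (rowChain_mem_Csub β hl' h hn x)
    · obtain rfl := Nat.add_left_cancel hn
      refine Submodule.mem_sup_left ?_
      cases β with
      | a => exact Submodule.mem_sup_left ⟨x, rfl⟩
      | b => exact Submodule.mem_sup_right ⟨x, rfl⟩
  obtain ⟨_, hv, w, hw, rfl⟩ := Submodule.mem_sup.1 (hle hz)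
  obtain ⟨_, ⟨x, rfl⟩, _, ⟨y, rfl⟩, rfl⟩ := Submodule.mem_sup.1 hv
  exact ⟨x, y, w, hw, rfl⟩

lemma exists_eq_cChain_of_mem_Csub {k : ℕ} {z : ChC p} (hz : z ∈ Csub p (k + 1) (2 * k + 1)) :
    ∃ x, z = cChain p (k + 1) x := by
  have hle : Csub p (k + 1) (2 * k + 1) ≤ LinearMap.range (cChain p (k + 1)) := by
    refine Csub_le (fun _ _ _ _ _ _ _ => by omega) fun k' x _ hn => ?_
    obtain rfl : k' = k := by omega
    exact ⟨x, rfl⟩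
  obtain ⟨x, rfl⟩ := hle hz
  exact ⟨x, rfl⟩

lemma rowCoord_eq_zero_of_mem_Csub {β : Row} {k m n : ℕ} (hk : m < k) {z : ChC p}
    (hz : z ∈ Csub p m n) : rowCoord p β k z = 0 := by
  have hle : Csub p m n ≤ LinearMap.ker (rowCoord p β k) :=
    Csub_le (fun _ _ l x _ hk' _ => rowCoord_rowChain_of_ne (Or.inr (by omega)) l x)
      fun _ x _ _ => rowCoord_cChain β k _ x
  exact hle hz

lemma lowerBoundary_mem_Csub (j : ℕ) {k l n : ℕ} (hk : 1 ≤ k) (hl : l ≤ k) (hn : k + l = n + 1)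
    (x : GroupRing p) : lowerBoundary p j k l x ∈ Csub p k n := by
  obtain ⟨k, rfl⟩ := Nat.exists_eq_add_one.2 hk
  obtain h | rfl := hl.lt_or_eq
  · rw [lowerBoundary_of_lt h]
    exact sub_mem (rowChain_mem_Csub _ (by omega) le_rfl (by omega) x)
      (rowChain_mem_Csub _ (by omega) le_rfl (by omega) x)
  · rw [lowerBoundary_self_apply]
    exact cChain_mem_Csub le_rfl (by omega) _

lemma DC_mem_Csub (j : ℕ) {m n : ℕ} {u : ChC p} (hu : u ∈ Csub p m (n + 1)) :
    DC p j u ∈ Csub p m n := by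
  have hle : Csub p m (n + 1) ≤ (Csub p m n).comap (DC p j) := by
    refine Csub_le (fun β k l x hl hk hn => ?_) fun k x hk hn => ?_
    · have hlower : lowerBoundary p j k l x ∈ Csub p m n :=
        Csub_mono (Nat.le_of_succ_le hk) n (lowerBoundary_mem_Csub j (by omega) hl hn x)
      rw [Submodule.mem_comap]
      cases l with
      | zero => rwa [DC_rowChain_zero j β (by omega)]
      | succ l =>
        rw [DC_rowChain_succ j β hl]
        exact add_mem (Submodule.smul_of_tower_mem _ _
          (rowChain_mem_Csub β (by omega) hk (by omega) _)) hlower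
    · rw [Submodule.mem_comap, DC_cChain]
      exact sub_mem (rowChain_mem_Csub _ le_rfl hk (by omega) _)
        (rowChain_mem_Csub _ le_rfl hk (by omega) _)
  exact hle hu

lemma DC_rowChain_mul_rowCoeff (j : ℕ) (β : Row) {k l : ℕ} (hk : 1 ≤ k) (hl : l ≤ k)
    (x : GroupRing p) : DC p j (rowChain p β (k + 1) l (x * rowCoeff p l)) =
      lowerBoundary p j k l (x * rowCoeff p l) := by
  cases l with
  | zero => exact DC_rowChain_zero j β hk _
  | succ l =>
    rw [DC_rowChain_succ j β hl, rowChain_mul_rowCoeff_mul_rowCoeff, smul_zero, zero_add]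

lemma DC_lowerBoundary_zero (j : ℕ) {k : ℕ} (hk : 1 ≤ k) (x : GroupRing p) :
    DC p j (lowerBoundary p j k 0 x) = 0 := by
  obtain ⟨k, rfl⟩ := Nat.exists_eq_add_one.2 hk
  rw [lowerBoundary_of_lt hk, LinearMap.sub_apply, map_sub]
  obtain rfl | h := Nat.eq_zero_or_pos k
  · rw [DC_rowChain_one_zero, DC_rowChain_one_zero, sub_self]
  · rw [DC_rowChain_zero j _ h, DC_rowChain_zero j _ h, sub_self]

lemma DC_lowerBoundary_succ (hodd : Odd p) (j : ℕ) {k l : ℕ} (hl : l + 1 ≤ k)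
    (x : GroupRing p) : DC p j (lowerBoundary p j k (l + 1) x) =
      -((-1 : ℤˣ) ^ (k - l) • lowerBoundary p j k l (x * rowCoeff p l)) := by
  rw [lowerBoundary_of_lt (j := j) hl, LinearMap.sub_apply]
  obtain h | rfl := hl.lt_or_eq
  · obtain ⟨k, rfl⟩ := Nat.exists_eq_add_one.2 (Nat.zero_lt_of_lt h)
    have hl' := Nat.le_of_lt_succ h
    rw [lowerBoundary_of_lt h, LinearMap.sub_apply, map_sub, DC_rowChain_succ j _ hl',
      DC_rowChain_succ j _ hl', Nat.succ_sub (by omega), pow_succ, mul_neg_one, Units.neg_smul,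
      neg_neg, smul_sub, add_sub_add_right_eq_sub]
  · have ha := rowChain_mul_rowCoeff_congr .a (l + 1) (l := l)
      (x := x * capCoeff p j ((-1) ^ (l + 1))) (y := -x)
      (by rw [mul_assoc, capCoeff_mul_oneSubTau, mul_neg, neg_mul])
    have hb := rowChain_mul_rowCoeff_congr .b (l + 1) (l := l)
      (x := x * capCoeff p j ((-1) ^ (l + 1)) * δ (halfRot p j)) (y := -x)
      (by rw [mul_assoc, mul_assoc, capCoeff_mul_halfRot_mul_oneSubTau hodd, mul_neg, neg_mul])
    rw [lowerBoundary_self_apply, DC_cChain, ha, hb, Nat.add_sub_cancel_left, pow_one,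
      Units.neg_smul, one_smul, neg_mul, map_neg, map_neg]
    abel

lemma rowCoeff_mul_capCoeff (hodd : Odd p) (j k : ℕ) :
    rowCoeff p (k + 1) * capCoeff p j ((-1) ^ (k + 1)) =
      -(rotNorm p j * rowCoeff p (k + 1)) := by
  have h := oneSubTau_neg_mul_capCoeff hodd j ((-1) ^ (k + 1))
  rwa [show -(-1 : ℤˣ) ^ (k + 1) = (-1) ^ k by rw [pow_succ, mul_neg_one, neg_neg]] at h

lemma DC_DC_cChain (hodd : Odd p) (j k : ℕ) (x : GroupRing p) :
    DC p j (DC p j (cChain p (k + 1) x)) = 0 := by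
  rw [DC_cChain, map_sub]
  cases k with
  | zero => rw [DC_rowChain_one_zero, DC_rowChain_one_zero, sub_self]
  | succ k =>
    have hk : 1 ≤ k + 1 := Nat.le_add_left 1 k
    have hω : δ (halfRot p j) * -(rotNorm p j * rowCoeff p (k + 1)) =
        -(rotNorm p j * rowCoeff p (k + 1)) := by
      rw [mul_neg, ← mul_assoc, of_halfRot_mul_rotNorm]
    rw [DC_rowChain_mul_rowCoeff j _ hk le_rfl, DC_rowChain_mul_rowCoeff j _ hk le_rfl,
      lowerBoundary_self_apply, lowerBoundary_self_apply]
    simp only [mul_assoc, rowCoeff_mul_capCoeff hodd, hω, sub_self]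

lemma DC_DC (hodd : Odd p) (j : ℕ) {m n : ℕ} {u : ChC p} (hu : u ∈ Csub p m (n + 1)) :
    DC p j (DC p j u) = 0 := by
  have hle : Csub p m (n + 1) ≤ LinearMap.ker (DC p j ∘ₗ DC p j) := by
    refine Csub_le (fun β k l x hl _ hn => ?_) fun k x _ _ => DC_DC_cChain hodd j k x
    have hk : 1 ≤ k := by omega
    rw [LinearMap.mem_ker, LinearMap.comp_apply]
    cases l with
    | zero => rw [DC_rowChain_zero j β hk, DC_lowerBoundary_zero j hk]
    | succ l =>
      rw [DC_rowChain_succ j β hl, map_add, LinearMap.map_smul_of_tower,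
        DC_rowChain_mul_rowCoeff j β hk (by omega), DC_lowerBoundary_succ hodd j hl, add_neg_cancel]
  exact hle hu

/-! ### Cycles and boundaries -/

lemma rowCoord_DC_rowChain_succ (j : ℕ) (β : Row) {k l : ℕ} (hl : l + 1 ≤ k) (x : GroupRing p) :
    rowCoord p β (k + 1) (DC p j (rowChain p β (k + 1) (l + 1) x)) =
      (-1 : ℤˣ) ^ (k - l) • (x * oneSubTau p ((-1) ^ (l + 1))) := by
  have hlower : rowCoord p β (k + 1) (lowerBoundary p j k (l + 1) x) = 0 :=
    rowCoord_eq_zero_of_mem_Csub k.lt_succ_self (lowerBoundary_mem_Csub j (by omega) hl rfl x)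
  rw [DC_rowChain_succ j β hl, map_add, hlower, add_zero, LinearMap.map_smul_of_tower,
    rowCoord_rowChain_mul_rowCoeff]

lemma rowCoord_DC_rowChain_of_ne (j : ℕ) {β β' : Row} (hβ : β ≠ β') {k l : ℕ} (hl : l + 1 ≤ k)
    (x : GroupRing p) :
    rowCoord p β (k + 1) (DC p j (rowChain p β' (k + 1) (l + 1) x)) = 0 := by
  have hlower : rowCoord p β (k + 1) (lowerBoundary p j k (l + 1) x) = 0 :=
    rowCoord_eq_zero_of_mem_Csub k.lt_succ_self (lowerBoundary_mem_Csub j (by omega) hl rfl x)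
  rw [DC_rowChain_succ j β' hl, map_add, hlower, add_zero, LinearMap.map_smul_of_tower,
    rowCoord_rowChain_of_ne (Or.inl hβ), smul_zero]

lemma exists_eq_rowChain_mul_rowCoeff_add {j k l : ℕ} (hl : l ≤ k) {z : ChC p}
    (hz : z ∈ Csub p (k + 1) (k + l)) (hDC : DC p j z = 0) :
    ∃ x y, ∃ w ∈ Csub p k (k + l), z = rowChain p .a (k + 1) l (x * rowCoeff p l) +
      rowChain p .b (k + 1) l (y * rowCoeff p l) + w := by
  obtain ⟨x, y, w, hw, rfl⟩ := exists_eq_rowChain_add_of_mem_Csub hl hz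
  cases l with
  | zero => exact ⟨x, y, w, hw, by simp only [rowCoeff, mul_one]⟩
  | succ l =>
    have hcoord (β : Row) := congrArg (rowCoord p β (k + 1)) hDC
    have hDw (β : Row) : rowCoord p β (k + 1) (DC p j w) = 0 :=
      rowCoord_eq_zero_of_mem_Csub k.lt_succ_self (DC_mem_Csub j (n := k + l) hw)
    have ha := hcoord .a
    have hb := hcoord .b
    rw [map_add, map_add, map_add, map_add, hDw, rowCoord_DC_rowChain_succ j _ hl,
      rowCoord_DC_rowChain_of_ne j (by simp) hl, add_zero, add_zero, map_zero,
      smul_eq_zero_iff_eq] at ha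
    rw [map_add, map_add, map_add, map_add, hDw, rowCoord_DC_rowChain_succ j _ hl,
      rowCoord_DC_rowChain_of_ne j (by simp) hl, add_zero, zero_add, map_zero,
      smul_eq_zero_iff_eq] at hb
    obtain ⟨x, rfl⟩ := exists_mul_rowCoeff_of_mul_eq_zero ha
    obtain ⟨y, rfl⟩ := exists_mul_rowCoeff_of_mul_eq_zero hb
    exact ⟨x, y, w, hw, rfl⟩

lemma exists_sub_DC_mem_Csub {j k n : ℕ} (hn : n < 2 * k) {z : ChC p}
    (hz : z ∈ Csub p (k + 1) n) (hDC : DC p j z = 0) :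
    ∃ u ∈ Csub p (k + 1) (n + 1), z - DC p j u ∈ Csub p k n := by
  obtain h | h := lt_or_ge n k
  · exact ⟨0, zero_mem _, by simpa using Csub_succ_le h hz⟩
  · obtain ⟨l, rfl⟩ := Nat.exists_eq_add_of_le h
    have hl : l + 1 ≤ k := by omega
    obtain ⟨x, y, w, hw, rfl⟩ := exists_eq_rowChain_mul_rowCoeff_add (by omega) hz hDC
    refine ⟨(-1 : ℤˣ) ^ (k - l) •
      (rowChain p .a (k + 1) (l + 1) x + rowChain p .b (k + 1) (l + 1) y), ?_, ?_⟩
    · exact Submodule.smul_of_tower_mem _ _ (add_mem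
        (rowChain_mem_Csub _ hl le_rfl rfl x) (rowChain_mem_Csub _ hl le_rfl rfl y))
    · have hlower (v : GroupRing p) : lowerBoundary p j k (l + 1) v ∈ Csub p k (k + l) :=
        lowerBoundary_mem_Csub j (by omega) hl rfl v
      have hsub : w - (-1 : ℤˣ) ^ (k - l) •
          (lowerBoundary p j k (l + 1) x + lowerBoundary p j k (l + 1) y) ∈ Csub p k (k + l) :=
        sub_mem hw (Submodule.smul_of_tower_mem _ _ (add_mem (hlower x) (hlower y)))
      convert hsub using 1
      rw [LinearMap.map_smul_of_tower, map_add, DC_rowChain_succ j _ hl, DC_rowChain_succ j _ hl]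
      simp only [smul_add, smul_smul, Int.units_mul_self, one_smul]
      abel

lemma rowChain_mul_of_tau_mul_rowCoeff (β : Row) (k l : ℕ) (x : GroupRing p) :
    rowChain p β k l (x * δ (tau p) * rowCoeff p l) =
      (-1 : ℤˣ) ^ l • rowChain p β k l (x * rowCoeff p l) := by
  rw [← LinearMap.map_smul_of_tower, ← smul_mul_assoc]
  refine rowChain_mul_rowCoeff_congr β k ?_
  rw [mul_assoc, of_tau_mul_oneSubTau, pow_succ, mul_neg_one, Units.neg_smul, neg_neg,
    mul_smul_comm, smul_mul_assoc]

variable (p) in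
/-- The class of the chain `(x * rowCoeff k)·a_{k+1,k}` modulo the boundaries of the chains
`y·c_{k+1}`. -/
def topRowClass (j k : ℕ) :
    GroupRing p →ₗ[ℤ] ChC p ⧸ LinearMap.range (DC p j ∘ₗ cChain p (k + 1)) :=
  Submodule.mkQ _ ∘ₗ rowChain p .a (k + 1) k ∘ₗ LinearMap.mulRight ℤ (rowCoeff p k)

lemma topRowClass_apply (j k : ℕ) (x : GroupRing p) :
    topRowClass p j k x = Submodule.mkQ _ (rowChain p .a (k + 1) k (x * rowCoeff p k)) :=
  rfl

lemma mkQ_rowChain_b (j k : ℕ) (x : GroupRing p) :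
    Submodule.mkQ (LinearMap.range (DC p j ∘ₗ cChain p (k + 1)))
      (rowChain p .b (k + 1) k (x * δ (halfRot p j) * rowCoeff p k)) = topRowClass p j k x := by
  rw [topRowClass_apply, Submodule.mkQ_apply, Submodule.mkQ_apply, Submodule.Quotient.eq,
    ← DC_cChain]
  exact ⟨x, rfl⟩

lemma topRowClass_mul_of_tau (j k : ℕ) (x : GroupRing p) :
    topRowClass p j k (x * δ (tau p)) = (-1 : ℤˣ) ^ k • topRowClass p j k x := by
  rw [topRowClass_apply, topRowClass_apply, rowChain_mul_of_tau_mul_rowCoeff,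
    LinearMap.map_smul_of_tower]

lemma topRowClass_mul_of_zeta_pow (hodd : Odd p) (j k : ℕ) (x : GroupRing p) :
    topRowClass p j k (x * δ (zeta p ^ j)) = topRowClass p j k x := by
  have hτ : x * δ (zeta p ^ j) * δ (tau p) * δ (halfRot p j) = x * δ (halfRot p j) * δ (tau p) := by
    simp only [mul_assoc, ← map_mul]
    rw [tau_mul_halfRot, ← halfRot_sq hodd, sq, mul_assoc, mul_inv_cancel_left]
  refine smul_left_cancel ((-1 : ℤˣ) ^ k) ?_
  calc (-1 : ℤˣ) ^ k • topRowClass p j k (x * δ (zeta p ^ j))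
      = topRowClass p j k (x * δ (zeta p ^ j) * δ (tau p)) := (topRowClass_mul_of_tau j k _).symm
    _ = (-1 : ℤˣ) ^ k • topRowClass p j k x := by
      rw [← mkQ_rowChain_b, hτ, rowChain_mul_of_tau_mul_rowCoeff, LinearMap.map_smul_of_tower,
        mkQ_rowChain_b]

lemma exists_eq_DC_add_smul_rowChain (hodd : Odd p) {j : ℕ} (hj : j.Coprime p) {k : ℕ}
    {z : ChC p} (hz : z ∈ Csub p (k + 1) (2 * k)) (hDC : DC p j z = 0) :
    ∃ u ∈ Csub p (k + 1) (2 * k + 1), ∃ t : ℤ,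
      z = DC p j u + t • rowChain p .a (k + 1) k (rowCoeff p k) := by
  have : NeZero p := ⟨hodd.pos.ne'⟩
  rw [two_mul] at hz
  obtain ⟨x, y, w, hw, rfl⟩ := exists_eq_rowChain_mul_rowCoeff_add le_rfl hz hDC
  rw [Csub_eq_bot (two_mul k).le, Submodule.mem_bot] at hw
  subst hw
  obtain ⟨y, rfl⟩ : ∃ y', y' * δ (halfRot p j) = y :=
    ⟨y * δ (halfRot p j)⁻¹, by rw [mul_assoc, ← map_mul, inv_mul_cancel, map_one, mul_one]⟩
  obtain ⟨t, ht⟩ := Submodule.mem_span_singleton.1 <| apply_mem_span_apply_one hj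
    (topRowClass_mul_of_zeta_pow hodd j k) (topRowClass_mul_of_tau j k) (x + y)
  rw [map_add, ← mkQ_rowChain_b j k y, topRowClass_apply, topRowClass_apply, ← map_add,
    ← map_smul, one_mul, eq_comm, Submodule.mkQ_apply, Submodule.mkQ_apply,
    Submodule.Quotient.eq] at ht
  obtain ⟨v, hv⟩ := ht
  refine ⟨cChain p (k + 1) v, cChain_mem_Csub le_rfl rfl v, t, ?_⟩
  rw [add_zero, ← sub_eq_iff_eq_add, ← hv, LinearMap.comp_apply]

variable (p) in
/-- The fundamental cycle of the sphere `S(mγ_j)`, for `m = k + 1`. -/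
def fundamentalCycle (j k : ℕ) : ChC p := cChain p (k + 1) (rotNorm p j * rowCoeff p (k + 1))

variable (p) in
/-- The coefficient of the unit of `D_{2p}` in `cCoord`. -/
def cCoeffOne : ChC p →ₗ[ℤ] ℤ :=
  Finsupp.lapply 1 ∘ₗ (MonoidAlgebra.coeffLinearEquiv ℤ).toLinearMap ∘ₗ cCoord p

lemma cCoeffOne_cChain (k : ℕ) (x : GroupRing p) : cCoeffOne p (cChain p k x) = x.coeff 1 := by
  rw [cCoeffOne, LinearMap.comp_apply, LinearMap.comp_apply, cCoord_cChain]
  rfl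

lemma fundamentalCycle_mem_Csub (j k : ℕ) :
    fundamentalCycle p j k ∈ Csub p (k + 1) (2 * k + 1) :=
  cChain_mem_Csub le_rfl rfl _

lemma cCoeffOne_fundamentalCycle [NeZero p] {j : ℕ} (hj : j.Coprime p) (k : ℕ) :
    cCoeffOne p (fundamentalCycle p j k) = 1 := by
  rw [fundamentalCycle, cCoeffOne_cChain, rowCoeff, coeff_one_rotNorm_mul_oneSubTau hj]

lemma DC_rowChain_rowCoeff (hodd : Odd p) (j : ℕ) (β : Row) (k : ℕ) :
    DC p j (rowChain p β (k + 2) (k + 1) (rowCoeff p (k + 1))) = -fundamentalCycle p j k := by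
  have h := DC_rowChain_mul_rowCoeff j β (Nat.le_add_left 1 k) le_rfl (1 : GroupRing p)
  rwa [one_mul, lowerBoundary_self_apply, rowCoeff_mul_capCoeff hodd, map_neg] at h

lemma DC_fundamentalCycle (hodd : Odd p) (j k : ℕ) : DC p j (fundamentalCycle p j k) = 0 := by
  rw [← neg_eq_zero, ← map_neg, ← DC_rowChain_rowCoeff hodd j .a]
  exact DC_DC hodd j (rowChain_mem_Csub .a le_rfl le_rfl (n := 2 * k + 2) (by omega) _)

lemma eq_smul_fundamentalCycle (hodd : Odd p) {j : ℕ} (hj : j.Coprime p) {k : ℕ} {z : ChC p}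
    (hz : z ∈ Csub p (k + 1) (2 * k + 1)) (hDC : DC p j z = 0) :
    z = cCoeffOne p z • fundamentalCycle p j k := by
  obtain ⟨x, rfl⟩ := exists_eq_cChain_of_mem_Csub hz
  rw [DC_cChain] at hDC
  have ha : x * oneSubTau p ((-1) ^ (k + 1)) = 0 := by
    simpa [rowCoord_rowChain_mul_rowCoeff, rowCoord_rowChain_of_ne] using
      congrArg (rowCoord p .a (k + 1)) hDC
  have hb : x * δ (halfRot p j) * oneSubTau p ((-1) ^ (k + 1)) = 0 := by
    simpa [rowCoord_rowChain_mul_rowCoeff, rowCoord_rowChain_of_ne] using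
      congrArg (rowCoord p .b (k + 1)) hDC
  have hx := eq_smul_rotNorm_mul_of_mul_eq_zero hodd hj ha hb
  rw [show -(-1 : ℤˣ) ^ (k + 1) = (-1) ^ k by rw [pow_succ, mul_neg_one, neg_neg]] at hx
  rw [cCoeffOne_cChain, fundamentalCycle, ← map_smul, rowCoeff, ← hx]

lemma exists_DC_eq_of_mem_Csub_two_mul (hodd : Odd p) {j : ℕ} (hj : j.Coprime p) {k : ℕ}
    {z : ChC p} (hz : z ∈ Csub p (k + 2) (2 * k + 2)) (hDC : DC p j z = 0) :
    ∃ u ∈ Csub p (k + 2) (2 * k + 3), DC p j u = z := by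
  have : NeZero p := ⟨hodd.pos.ne'⟩
  obtain ⟨u, hu, t, rfl⟩ := exists_eq_DC_add_smul_rowChain hodd hj (k := k + 1) hz hDC
  rw [map_add, DC_DC hodd j hu, zero_add, map_smul, DC_rowChain_rowCoeff hodd] at hDC
  have ht := congrArg (cCoeffOne p) hDC
  rw [map_smul, map_neg, cCoeffOne_fundamentalCycle hj, map_zero, smul_neg, neg_eq_zero,
    smul_eq_mul, mul_one] at ht
  exact ⟨u, hu, by rw [ht, zero_smul, add_zero]⟩

lemma exists_DC_eq_of_DC_eq_zero (hodd : Odd p) {j : ℕ} (hj : j.Coprime p) {k n : ℕ}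
    (hn : 0 < n) (hnk : n < 2 * k + 1) {z : ChC p} (hz : z ∈ Csub p (k + 1) n)
    (hDC : DC p j z = 0) : ∃ u ∈ Csub p (k + 1) (n + 1), DC p j u = z := by
  induction k generalizing z with
  | zero => omega
  | succ k ih =>
    obtain rfl | hlt : n = 2 * k + 2 ∨ n < 2 * (k + 1) := by omega
    · exact exists_DC_eq_of_mem_Csub_two_mul hodd hj hz hDC
    obtain ⟨u, hu, hmem⟩ := exists_sub_DC_mem_Csub hlt hz hDC
    suffices hsub : ∃ v ∈ Csub p (k + 2) (n + 1), DC p j v = z - DC p j u by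
      obtain ⟨v, hv, hDv⟩ := hsub
      exact ⟨v + u, add_mem hv hu, by rw [map_add, hDv, sub_add_cancel]⟩
    have hDsub : DC p j (z - DC p j u) = 0 := by rw [map_sub, hDC, DC_DC hodd j hu, sub_zero]
    obtain rfl | hlt : n = 2 * k + 1 ∨ n < 2 * k + 1 := by omega
    · refine ⟨-(cCoeffOne p (z - DC p j u) •
        rowChain p .a (k + 2) (k + 1) (rowCoeff p (k + 1))), ?_, ?_⟩
      · exact neg_mem (Submodule.smul_mem _ _ (rowChain_mem_Csub .a le_rfl le_rfl (by omega) _))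
      · rw [map_neg, map_smul, DC_rowChain_rowCoeff hodd, smul_neg, neg_neg]
        exact (eq_smul_fundamentalCycle hodd hj hmem hDsub).symm
    · obtain ⟨v, hv, hDv⟩ := ih hlt hmem hDsub
      exact ⟨v, Csub_mono (Nat.le_succ _) _ hv, hDv⟩

variable (p) in
/-- The augmentation, sending every cell to `1`. -/
def augmentation : ChC p →ₗ[ℤ] ℤ := Finsupp.linearCombination ℤ fun _ => 1

lemma augmentation_rowChain_mul_of (β : Row) (k l : ℕ) (x : GroupRing p) (g : DihedralGroup p) :
    augmentation p (rowChain p β k l (x * δ g)) = augmentation p (rowChain p .a k l x) := by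
  have h : augmentation p ∘ₗ rowChain p β k l ∘ₗ LinearMap.mulRight ℤ (δ g) =
      augmentation p ∘ₗ rowChain p .a k l := linearMap_ext_of fun h => by
    simp [augmentation, ← map_mul, -MonoidAlgebra.of_apply]
  exact LinearMap.congr_fun h x

lemma augmentation_DC_eq_zero (j : ℕ) {m : ℕ} {u : ChC p} (hu : u ∈ Csub p m 1) :
    augmentation p (DC p j u) = 0 := by
  have hle : Csub p m 1 ≤ LinearMap.ker (augmentation p ∘ₗ DC p j) := by
    refine Csub_le (fun β k l x hl _ hn => ?_) fun k x _ hn => ?_ <;>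
      rw [LinearMap.mem_ker, LinearMap.comp_apply]
    · obtain ⟨rfl, rfl⟩ : k = 1 ∧ l = 0 := by omega
      have h := augmentation_rowChain_mul_of .b 1 0 x 1
      rw [map_one, mul_one] at h
      rw [DC_rowChain_zero j β le_rfl, lowerBoundary_of_lt one_pos, LinearMap.sub_apply, map_sub,
        h, sub_self]
    · obtain rfl : k = 0 := by omega
      rw [DC_cChain, rowCoeff, mul_one, mul_one, map_sub, augmentation_rowChain_mul_of, sub_self]
  exact hle hu

lemma augmentation_rowChain_one (β : Row) (k l : ℕ) : augmentation p (rowChain p β k l 1) = 1 := by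
  rw [← map_one δ, rowChain_of, augmentation, linearCombination_single, one_smul]

lemma exists_DC_eq_of_augmentation_eq_zero (hodd : Odd p) {j : ℕ} (hj : j.Coprime p) {m : ℕ}
    {z : ChC p} (hz : z ∈ Csub p (m + 1) 0) (haug : augmentation p z = 0) :
    ∃ u ∈ Csub p (m + 1) 1, DC p j u = z := by
  have hz : z ∈ Csub p 1 0 := by
    induction m with
    | zero => exact hz
    | succ m ih => exact ih (Csub_succ_le m.succ_pos hz)
  have hDC : DC p j z = 0 := by
    obtain ⟨x, y, w, hw, rfl⟩ := exists_eq_rowChain_add_of_mem_Csub (k := 0) (l := 0) le_rfl hz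
    rw [Csub_eq_bot le_rfl, Submodule.mem_bot] at hw
    rw [hw, add_zero, map_add, DC_rowChain_one_zero, DC_rowChain_one_zero, add_zero]
  obtain ⟨u, hu, t, rfl⟩ := exists_eq_DC_add_smul_rowChain hodd hj (k := 0) hz hDC
  rw [map_add, augmentation_DC_eq_zero j hu, zero_add, map_smul, rowCoeff,
    augmentation_rowChain_one, smul_eq_mul, mul_one] at haug
  exact ⟨u, Csub_mono (Nat.le_add_left 1 m) _ hu, by rw [haug, zero_smul, add_zero]⟩

lemma nonempty_homology_equiv {R M : Type*} [Ring R] [AddCommGroup M] [Module R M]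
    {Z B : Submodule R M} {f : M →ₗ[R] R} (hf : ∀ z ∈ Z, f z = 0 ↔ z ∈ B) {z₀ : M}
    (hz₀ : z₀ ∈ Z) (hone : f z₀ = 1) : Nonempty ((Z ⧸ B.comap Z.subtype) ≃ₗ[R] R) := by
  have hker : B.comap Z.subtype = LinearMap.ker (f.domRestrict Z) :=
    Submodule.ext fun z => (hf z z.2).symm
  have hsurj : Function.Surjective (f.domRestrict Z) := fun r =>
    ⟨r • ⟨z₀, hz₀⟩, by rw [map_smul, LinearMap.domRestrict_apply, hone, smul_eq_mul, mul_one]⟩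
  exact ⟨(Submodule.quotEquivOfEq _ _ hker).trans (LinearMap.quotKerEquivOfSurjective _ hsurj)⟩

lemma nonempty_homology_zero_equiv (hodd : Odd p) {j : ℕ} (hj : j.Coprime p) (m : ℕ) :
    Nonempty (HcC p (m + 1) j 0 ≃ₗ[ℤ] ℤ) := by
  refine nonempty_homology_equiv (f := augmentation p) (fun z hz => ⟨fun haug => ?_, ?_⟩)
    (z₀ := rowChain p .a 1 0 1) ⟨?_, ?_⟩ (augmentation_rowChain_one .a 1 0)
  · exact exists_DC_eq_of_augmentation_eq_zero hodd hj hz.1 haug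
  · rintro ⟨u, hu, rfl⟩
    exact augmentation_DC_eq_zero j hu
  · exact rowChain_mem_Csub .a le_rfl (Nat.le_add_left 1 m) rfl 1
  · exact DC_rowChain_one_zero j .a 1

lemma nonempty_homology_top_equiv (hodd : Odd p) {j : ℕ} (hj : j.Coprime p) (m : ℕ) :
    Nonempty (HcC p (m + 1) j (2 * m + 1) ≃ₗ[ℤ] ℤ) := by
  have : NeZero p := ⟨hodd.pos.ne'⟩
  refine nonempty_homology_equiv (f := cCoeffOne p) (fun z hz => ?_)
    ⟨fundamentalCycle_mem_Csub j m, DC_fundamentalCycle hodd j m⟩ (cCoeffOne_fundamentalCycle hj m)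
  rw [Csub_eq_bot (by omega), Submodule.map_bot, Submodule.mem_bot]
  refine ⟨fun h => ?_, fun h => by rw [h, map_zero]⟩
  rw [eq_smul_fundamentalCycle hodd hj hz.1 hz.2, h, zero_smul]

lemma subsingleton_homology (hodd : Odd p) {j : ℕ} (hj : j.Coprime p) {m n : ℕ} (h0 : n ≠ 0)
    (htop : n ≠ 2 * m + 1) : Subsingleton (HcC p (m + 1) j n) := by
  refine Submodule.Quotient.subsingleton_iff.2 (eq_top_iff.2 fun z _ => ?_)
  obtain ⟨z, hz, hDC⟩ := z
  obtain h | h := lt_or_ge n (2 * m + 1)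
  · exact exists_DC_eq_of_DC_eq_zero hodd hj (Nat.pos_of_ne_zero h0) h hz hDC
  · rw [SetLike.mem_coe, Csub_eq_bot (by omega), Submodule.mem_bot] at hz
    exact ⟨0, zero_mem _, by rw [map_zero]; exact hz.symm⟩

end DihedralCell

end

open DihedralCell in
theorem dihedral_cellular_homology_of_sphere_general
    (p : ℕ) (hodd : Odd p) (j : ℕ) (hj : j.Coprime p) (m : ℕ) (hm : 1 ≤ m) (n : ℕ) :
    Nonempty (HcC p m j n ≃ₗ[ℤ] ZMod (if n = 0 ∨ n = 2 * m - 1 then 0 else 1)) := by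
  obtain ⟨m, rfl⟩ := Nat.exists_eq_add_one.2 hm
  have hdim : 2 * (m + 1) - 1 = 2 * m + 1 := by omega
  rw [hdim]
  by_cases h : n = 0 ∨ n = 2 * m + 1
  · rw [if_pos h]
    obtain rfl | rfl := h
    · exact nonempty_homology_zero_equiv hodd hj m
    · exact nonempty_homology_top_equiv hodd hj m
  · rw [if_neg h]
    have := subsingleton_homology hodd hj (not_or.1 h).1 (not_or.1 h).2
    exact ⟨LinearEquiv.ofSubsingleton _ _⟩

open DihedralCell in
/-- The homology of the underlying chain complex of abelian groups of the
dihedral cellular complex `C(j)` is that of the sphere `S^{2m-1}`: `H_n ≅ ℤ` for `n = 0`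
and `n = 2m-1`, and `H_n = 0` otherwise. (`ZMod 0 = ℤ`, `ZMod 1 = 0`.) -/
theorem dihedral_cellular_homology_of_sphere
    (p : ℕ) (hp : p.Prime) (hodd : Odd p)
    (j : ℕ) (hj1 : 1 ≤ j) (hj2 : j ≤ p - 1)
    (m : ℕ) (hm : 1 ≤ m) :
    ∀ n : ℕ, Nonempty (HcC p m j n ≃ₗ[ℤ]
      ZMod (if n = 0 ∨ n = 2 * m - 1 then 0 else 1)) :=
  dihedral_cellular_homology_of_sphere_general p hodd j
    (Nat.coprime_of_lt_prime (Nat.pos_iff_ne_zero.1 hj1) (Nat.lt_of_le_pred hp.pos hj2) hp).symm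
    m hm
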